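/- Averaging commutes with Poisson bracket against invariants: let H : ℝⁿ×ℝⁿ → ℝ be smooth with complete canonical Hamiltonian vector field X_H whose flow is periodic with smooth frequency function ω > 0, and let ψ be the 2π-periodic flow of the generator Υ = (1/ω) X_H. If f, g : ℝⁿ×ℝⁿ → ℝ are smooth and g is S¹-invariant (g ∘ ψ_t = g for all t), then ⟨{f, g}⟩ = {⟨f⟩, g}, where ⟨h⟩(x) = (1/(2π)) ∫₀^{2π} h(ψ t x) dt and {·,·} is the canonical Poisson bracket. -/

import Mathlib

open Real

/-- The canonical Hamiltonian vector field `X_H = (∂H/∂p, −∂H/∂q)` on ℝⁿ × ℝⁿ. -/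
noncomputable def hamVF {n : ℕ} (H : ((Fin n → ℝ) × (Fin n → ℝ)) → ℝ)
    (x : (Fin n → ℝ) × (Fin n → ℝ)) : (Fin n → ℝ) × (Fin n → ℝ) :=
  (fun i => fderiv ℝ H x (0, Pi.single i 1),
   fun i => - fderiv ℝ H x (Pi.single i 1, 0))

/-- The canonical Poisson bracket `{f,g} = Σᵢ (∂f/∂qᵢ ∂g/∂pᵢ − ∂f/∂pᵢ ∂g/∂qᵢ)`. -/
noncomputable def pbracket {n : ℕ} (f g : ((Fin n → ℝ) × (Fin n → ℝ)) → ℝ)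
    (x : (Fin n → ℝ) × (Fin n → ℝ)) : ℝ :=
  ∑ i, (fderiv ℝ f x (Pi.single i 1, 0) * fderiv ℝ g x (0, Pi.single i 1)
      - fderiv ℝ f x (0, Pi.single i 1) * fderiv ℝ g x (Pi.single i 1, 0))

open Set Metric Filter Topology MeasureTheory

section Flow

variable {E : Type*} [NormedAddCommGroup E] [NormedSpace ℝ E]

/-- A linear ODE with continuous coefficients has a solution on every interval `[0, L]`. -/
theorem exists_linear_ode_solution [FiniteDimensional ℝ E] {B : ℝ → E →L[ℝ] E}
    (hB : Continuous B) {L : ℝ} (hL : 0 ≤ L) (y₀ : E) :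
    ∃ y : ℝ → E, y 0 = y₀ ∧
      ∀ t ∈ Icc 0 L, HasDerivWithinAt y (B t (y t)) (Icc 0 L) t := by
  have : CompleteSpace E := FiniteDimensional.complete ℝ E
  obtain ⟨K, hK⟩ := isCompact_Icc.exists_bound_of_continuousOn (hB.continuousOn (s := Icc 0 L))
  have hK0 : 0 ≤ K := (norm_nonneg _).trans (hK 0 ⟨le_rfl, hL⟩)
  set R : ℝ := ‖y₀‖ * exp (K * L) + 1
  have hRpos : 0 < R := by positivity
  let b : ContDiffBump (0 : E) := ⟨R, R + 1, hRpos, by linarith⟩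
  let χ : E → E := fun y => b y • y
  have hχs : HasCompactSupport χ := b.hasCompactSupport.smul_right
  have hχd : ContDiff ℝ 1 χ := (b.contDiff (n := 1)).smul contDiff_id
  obtain ⟨C, hC⟩ := hχd.lipschitzWith_of_hasCompactSupport hχs one_ne_zero
  obtain ⟨N, hN⟩ := hχs.exists_bound_of_continuous hχd.continuous
  have hN0 : 0 ≤ N := (norm_nonneg _).trans (hN 0)
  have hχle : ∀ y, ‖χ y‖ ≤ ‖y‖ := fun y => by
    rw [norm_smul, Real.norm_of_nonneg b.nonneg]
    exact mul_le_of_le_one_left (norm_nonneg _) b.le_one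
  lift K to NNReal using hK0
  lift N to NNReal using hN0
  have hPL : IsPicardLindelof (fun t y => B t (χ y)) (⟨0, le_rfl, hL⟩ : Icc 0 L) y₀
      (K * N * L.toNNReal) 0 (K * N) (K * C) := by
    refine ⟨fun t ht => ?_, fun y _ => ?_, fun t ht y _ => ?_, ?_⟩
    · refine LipschitzWith.lipschitzOnWith (((B t).lipschitz.comp hC).weaken ?_)
      exact mul_le_mul_left (show ‖B t‖₊ ≤ K from hK t ht) C
    · exact (hB.clm_apply continuous_const).continuousOn
    · exact (B t).le_of_opNorm_le_of_le (hK t ht) (hN y)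
    · simp [hL]
  obtain ⟨y, hy0, hy⟩ := hPL.exists_eq_forall_mem_Icc_hasDerivWithinAt₀
  refine ⟨y, hy0, fun t ht => ?_⟩
  have hbd := norm_le_gronwallBound_of_norm_deriv_right_le (f := y) (δ := ‖y₀‖) (K := K) (ε := 0)
    (fun s hs => (hy s hs).continuousWithinAt)
    (fun s hs => (hy s (Ico_subset_Icc_self hs)).mono_of_mem_nhdsWithin
      (Icc_mem_nhdsGE_of_mem hs)) (by rw [show y 0 = y₀ from hy0])
    (fun s hs => by
      rw [add_zero]
      exact (B s).le_of_opNorm_le_of_le (hK s (Ico_subset_Icc_self hs)) (hχle _)) t ht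
  rw [gronwallBound_ε0, sub_zero] at hbd
  have hle : ‖y t‖ ≤ R := hbd.trans (by
    have : exp (K * t) ≤ exp (K * L) := by
      gcongr
      exact ht.2
    nlinarith [norm_nonneg y₀])
  have h1 : χ (y t) = y t := by
    have : b (y t) = 1 := b.one_of_mem_closedBall (by simpa [b] using hle)
    simp [χ, this]
  simpa [h1] using hy t ht

/-- First-order Taylor estimate with quadratic remainder on a closed ball. -/
theorem exists_norm_sub_sub_fderiv_le [FiniteDimensional ℝ E] {F : Type*} [NormedAddCommGroup F]
    [NormedSpace ℝ F] {V : E → F} (hV : ContDiff ℝ 2 V) (R : ℝ) :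
    ∃ C : ℝ, 0 ≤ C ∧ ∀ a ∈ closedBall (0 : E) R, ∀ b ∈ closedBall (0 : E) R,
      ‖V b - V a - fderiv ℝ V a (b - a)‖ ≤ C * ‖b - a‖ ^ 2 := by
  have : ProperSpace E := FiniteDimensional.proper ℝ E
  have hd : ContDiff ℝ 1 (fderiv ℝ V) := hV.fderiv_right (by norm_num)
  obtain ⟨C, hC⟩ := hd.contDiffOn.exists_lipschitzOnWith one_ne_zero
    (convex_closedBall (0 : E) R) (isCompact_closedBall _ _)
  refine ⟨C, C.2, fun a ha b hb => ?_⟩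
  have hseg : segment ℝ a b ⊆ closedBall (0 : E) R :=
    (convex_closedBall _ _).segment_subset ha hb
  have := (convex_segment a b).norm_image_sub_le_of_norm_hasFDerivWithin_le'
    (f := V) (f' := fderiv ℝ V) (φ := fderiv ℝ V a) (C := C * ‖b - a‖)
    (fun z _ => ((hV.differentiable two_ne_zero) z).hasFDerivAt.hasFDerivWithinAt)
    (fun z hz => ?_) (left_mem_segment ℝ a b) (right_mem_segment ℝ a b)
  · rwa [mul_assoc, ← sq] at this
  · refine (hC.norm_sub_le (hseg hz) ha).trans ?_
    gcongr
    exact norm_sub_le_of_mem_segment hz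

/-- Trajectories of a `C¹` vector field on `[0, L]` depend on the initial point in a locally
Lipschitz way. -/
theorem exists_flow_lipschitz_bound [FiniteDimensional ℝ E] {V : E → E} (hV : ContDiff ℝ 1 V)
    {ψ : ℝ → E → E} (hψ0 : ∀ x, ψ 0 x = x)
    (hψ : ∀ t x, HasDerivAt (fun τ => ψ τ x) (V (ψ t x)) t) (x : E) (L : ℝ) :
    ∃ C R : ℝ, 0 ≤ C ∧ ∀ᶠ y in 𝓝 x, ∀ t ∈ Icc 0 L,
      ‖ψ t y - ψ t x‖ ≤ C * ‖y - x‖ ∧ ψ t y ∈ closedBall 0 R ∧ ψ t x ∈ closedBall 0 R := by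
  have : ProperSpace E := FiniteDimensional.proper ℝ E
  have hcont : ∀ y, Continuous fun t => ψ t y := fun y =>
    continuous_iff_continuousAt.2 fun t => (hψ t y).continuousAt
  obtain ⟨R, hR⟩ :=
    isCompact_Icc.exists_bound_of_continuousOn ((hcont x).continuousOn (s := Icc 0 L))
  obtain ⟨K, hK⟩ := hV.contDiffOn.exists_lipschitzOnWith one_ne_zero
    (convex_closedBall (0 : E) (R + 1)) (isCompact_closedBall _ _)
  set C : ℝ := exp ((K + 1) * L)
  have hCpos : 0 < C := exp_pos _
  have hball : ∀ t ∈ Icc 0 L, ∀ z, ‖z - ψ t x‖ ≤ 1 → z ∈ closedBall (0 : E) (R + 1) := by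
    intro t ht z hz
    rw [mem_closedBall_zero_iff]
    linarith [norm_le_norm_add_norm_sub' z (ψ t x), hR t ht]
  have hx : ∀ t ∈ Icc 0 L, ψ t x ∈ closedBall (0 : E) (R + 1) := fun t ht =>
    hball t ht _ (by simp)
  refine ⟨C, R + 1, hCpos.le, ?_⟩
  filter_upwards [ball_mem_nhds x (inv_pos.2 hCpos)] with y hy
  have hyC : C * ‖y - x‖ ≤ 1 := by
    rw [mem_ball_iff_norm] at hy
    exact (mul_le_mul_of_nonneg_left hy.le hCpos.le).trans_eq (mul_inv_cancel₀ hCpos.ne')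
  suffices hlip : ∀ t ∈ Icc 0 L, ‖ψ t y - ψ t x‖ ≤ C * ‖y - x‖ from fun t ht =>
    ⟨hlip t ht, hball t ht _ ((hlip t ht).trans hyC), hx t ht⟩
  rcases eq_or_ne y x with rfl | hne
  · simp
  have hpos : 0 < ‖y - x‖ := norm_pos_iff.2 (sub_ne_zero.2 hne)
  have hexp : ∀ t ∈ Icc 0 L, ‖y - x‖ * exp ((K + 1) * t) ≤ C * ‖y - x‖ := fun t ht => by
    rw [mul_comm]
    gcongr
    exact exp_le_exp.2 (by gcongr; exact ht.2)
  intro t ht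
  refine (image_norm_le_of_norm_deriv_right_lt_deriv_boundary
    (f := fun t => ψ t y - ψ t x) (f' := fun t => V (ψ t y) - V (ψ t x))
    (B := fun t => ‖y - x‖ * exp ((K + 1) * t))
    (B' := fun t => (K + 1) * (‖y - x‖ * exp ((K + 1) * t)))
    ((hcont y).sub (hcont x)).continuousOn
    (fun s _ => ((hψ s y).sub (hψ s x)).hasDerivWithinAt) (by simp [hψ0]) (fun s => ?_)
    (fun s hs hEq => ?_) ht).trans (hexp t ht)
  · exact ((((hasDerivAt_id' s).const_mul ((K : ℝ) + 1)).exp).const_mul ‖y - x‖).congr_deriv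
      (by ring)
  · have hs' := Ico_subset_Icc_self hs
    have h1 := hK.norm_sub_le (hball s hs' (ψ s y)
      (hEq.trans_le ((hexp s hs').trans hyC))) (hx s hs')
    refine h1.trans_lt ?_
    rw [hEq]
    have : 0 < ‖y - x‖ * exp ((K + 1) * s) := by positivity
    linarith

/-- The flow of a `C²` vector field is differentiable in the initial point, and its derivative
solves the variational equation along the trajectory. -/
theorem exists_hasFDerivAt_flow [FiniteDimensional ℝ E] {V : E → E} (hV : ContDiff ℝ 2 V)
    {ψ : ℝ → E → E} (hψ0 : ∀ x, ψ 0 x = x)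
    (hψ : ∀ t x, HasDerivAt (fun τ => ψ τ x) (V (ψ t x)) t) (x : E) {L : ℝ} (hL : 0 ≤ L) :
    ∃ M : ℝ → E →L[ℝ] E, M 0 = .id ℝ E ∧
      (∀ t ∈ Icc 0 L, HasDerivWithinAt M ((fderiv ℝ V (ψ t x)).comp (M t)) (Icc 0 L) t) ∧
      ∀ t ∈ Icc 0 L, HasFDerivAt (ψ t) (M t) x := by
  have hcont : ∀ y, Continuous fun t => ψ t y := fun y =>
    continuous_iff_continuousAt.2 fun t => (hψ t y).continuousAt
  have hA : Continuous fun t => fderiv ℝ V (ψ t x) :=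
    (hV.continuous_fderiv two_ne_zero).comp (hcont x)
  obtain ⟨M, hM0, hM⟩ := exists_linear_ode_solution
    (B := fun t => ContinuousLinearMap.compL ℝ E E E (fderiv ℝ V (ψ t x)))
    ((ContinuousLinearMap.compL ℝ E E E).continuous.comp hA) hL (.id ℝ E)
  simp only [ContinuousLinearMap.compL_apply] at hM
  refine ⟨M, hM0, hM, fun t ht => ?_⟩
  obtain ⟨K₀, hK₀⟩ := isCompact_Icc.exists_bound_of_continuousOn (hA.continuousOn (s := Icc 0 L))
  set K : ℝ := max K₀ 1
  have hKpos : 0 < K := lt_max_of_lt_right one_pos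
  obtain ⟨C, R, hC, hCR⟩ := exists_flow_lipschitz_bound (hV.of_le one_le_two) hψ0 hψ x L
  obtain ⟨C₂, hC₂, hT⟩ := exists_norm_sub_sub_fderiv_le hV R
  suffices hquad : ∀ᶠ y in 𝓝 x, ‖ψ t y - ψ t x - M t (y - x)‖ ≤
      (C₂ * C ^ 2 / K * (exp (K * t) - 1)) * ‖y - x‖ ^ 2 by
    refine .of_isLittleO ((Asymptotics.IsBigO.of_bound
      (C₂ * C ^ 2 / K * (exp (K * t) - 1)) ?_).trans_isLittleO
      (Asymptotics.isLittleO_pow_sub_sub x one_lt_two))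
    simpa only [norm_pow, norm_norm] using hquad
  filter_upwards [hCR] with y hy
  have hd : ∀ s ∈ Icc 0 L, HasDerivWithinAt (fun s => ψ s y - ψ s x - M s (y - x))
      (V (ψ s y) - V (ψ s x) - fderiv ℝ V (ψ s x) (M s (y - x))) (Icc 0 L) s := fun s hs =>
    ((hψ s y).hasDerivWithinAt.sub (hψ s x).hasDerivWithinAt).sub
      (by simpa using (hM s hs).clm_apply (hasDerivWithinAt_const s _ (y - x)))
  have := norm_le_gronwallBound_of_norm_deriv_right_le
    (δ := 0) (K := K) (ε := C₂ * (C * ‖y - x‖) ^ 2)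
    (fun s hs => (hd s hs).continuousWithinAt)
    (fun s hs => (hd s (Ico_subset_Icc_self hs)).mono_of_mem_nhdsWithin
      (Icc_mem_nhdsGE_of_mem hs)) (by simp [hψ0, hM0]) (fun s hs => ?_) t ht
  · rw [gronwallBound_of_K_ne_0 hKpos.ne'] at this
    refine this.trans_eq ?_
    simp only [sub_zero]
    ring
  · have hs' := Ico_subset_Icc_self hs
    obtain ⟨h1, h2, h3⟩ := hy s hs'
    have h4 : V (ψ s y) - V (ψ s x) - fderiv ℝ V (ψ s x) (M s (y - x)) =
        fderiv ℝ V (ψ s x) (ψ s y - ψ s x - M s (y - x)) +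
        (V (ψ s y) - V (ψ s x) - fderiv ℝ V (ψ s x) (ψ s y - ψ s x)) := by
      simp only [map_sub]
      abel
    rw [h4]
    refine (norm_add_le _ _).trans (add_le_add ?_ ?_)
    · exact (fderiv ℝ V (ψ s x)).le_of_opNorm_le ((hK₀ s hs').trans (le_max_left _ _)) _
    · refine (hT _ h3 _ h2).trans ?_
      gcongr

/-- The integral of a `C¹` function along the flow of a `C²` vector field may be differentiated
under the integral sign. -/
theorem hasFDerivAt_integral_comp_flow [FiniteDimensional ℝ E] {V : E → E} (hV : ContDiff ℝ 2 V)
    {ψ : ℝ → E → E} (hψ0 : ∀ x, ψ 0 x = x)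
    (hψ : ∀ t x, HasDerivAt (fun τ => ψ τ x) (V (ψ t x)) t) {f : E → ℝ} (hf : ContDiff ℝ 1 f)
    {x : E} {L : ℝ} (hL : 0 ≤ L) {M : ℝ → E →L[ℝ] E} (hMc : ContinuousOn M (Icc 0 L))
    (hM : ∀ t ∈ Icc 0 L, HasFDerivAt (ψ t) (M t) x) :
    IntervalIntegrable (fun t => (fderiv ℝ f (ψ t x)).comp (M t)) volume 0 L ∧
    HasFDerivAt (fun y => ∫ t in (0 : ℝ)..L, f (ψ t y))
      (∫ t in (0 : ℝ)..L, (fderiv ℝ f (ψ t x)).comp (M t)) x := by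
  have : ProperSpace E := FiniteDimensional.proper ℝ E
  have hcont : ∀ y, Continuous fun t => ψ t y := fun y =>
    continuous_iff_continuousAt.2 fun t => (hψ t y).continuousAt
  obtain ⟨C, R, hC, hCR⟩ := exists_flow_lipschitz_bound (hV.of_le one_le_two) hψ0 hψ x L
  obtain ⟨K, hK⟩ := hf.contDiffOn.exists_lipschitzOnWith one_ne_zero
    (convex_closedBall (0 : E) R) (isCompact_closedBall _ _)
  have hF' : ContinuousOn (fun t => (fderiv ℝ f (ψ t x)).comp (M t)) (Icc 0 L) :=
    ((hf.continuous_fderiv one_ne_zero).comp (hcont x)).continuousOn.clm_comp hMc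
  refine ⟨(hF'.mono (uIcc_of_le hL).subset).intervalIntegrable, ?_⟩
  simp only [intervalIntegral.integral_of_le hL]
  refine (hasFDerivAt_integral_of_dominated_loc_of_lip' (bound := fun _ => K * C) hCR
    (fun y _ => (hf.continuous.comp (hcont y)).aestronglyMeasurable)
    (((hf.continuous.comp (hcont x)).integrableOn_Icc).mono_set Ioc_subset_Icc_self)
    ((hF'.mono Ioc_subset_Icc_self).aestronglyMeasurable measurableSet_Ioc) ?_
    (integrable_const _) ?_).2
  · refine (ae_restrict_iff' measurableSet_Ioc).2 (.of_forall fun t ht y hy => ?_)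
    obtain ⟨h1, h2, h3⟩ := hy t (Ioc_subset_Icc_self ht)
    refine (hK.norm_sub_le h2 h3).trans ?_
    rw [mul_assoc]
    gcongr
  · refine (ae_restrict_iff' measurableSet_Ioc).2 (.of_forall fun t ht => ?_)
    exact ((hf.differentiable one_ne_zero) _).hasFDerivAt.comp x (hM t (Ioc_subset_Icc_self ht))

end Flow

section Symplectic

variable {n : ℕ}

/-- The phase space ℝⁿ × ℝⁿ with coordinates `(q, p)`. -/
abbrev PhaseSpace (n : ℕ) := (Fin n → ℝ) × (Fin n → ℝ)

/-- The canonical symplectic form `Ω(a, b) = Σᵢ (a_{qᵢ} b_{pᵢ} − a_{pᵢ} b_{qᵢ})`. -/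
noncomputable def symplecticForm (n : ℕ) :
    PhaseSpace n →L[ℝ] PhaseSpace n →L[ℝ] ℝ :=
  let q (i : Fin n) : PhaseSpace n →L[ℝ] ℝ :=
    (ContinuousLinearMap.proj i).comp (.fst ℝ _ _)
  let p (i : Fin n) : PhaseSpace n →L[ℝ] ℝ :=
    (ContinuousLinearMap.proj i).comp (.snd ℝ _ _)
  ∑ i, ((q i).smulRight (p i) - (p i).smulRight (q i))

theorem symplecticForm_apply (a b : PhaseSpace n) :
    symplecticForm n a b = ∑ i, (a.1 i * b.2 i - a.2 i * b.1 i) := by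
  simp [symplecticForm]

theorem symplecticForm_antisymm (a b : PhaseSpace n) :
    symplecticForm n a b = -symplecticForm n b a := by
  simp only [symplecticForm_apply, ← Finset.sum_neg_distrib]
  exact Finset.sum_congr rfl fun i _ => by ring

theorem clm_apply_eq_sum (ℓ : PhaseSpace n →L[ℝ] ℝ) (b : PhaseSpace n) :
    ℓ b = ∑ i, (b.1 i * ℓ (Pi.single i 1, 0) + b.2 i * ℓ (0, Pi.single i 1)) := by
  have hb : b = ∑ i, (b.1 i • ((Pi.single i 1, 0) : PhaseSpace n) + b.2 i • (0, Pi.single i 1)) := by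
    ext j <;> simp [Prod.fst_sum, Prod.snd_sum, Pi.single_apply]
  conv_lhs => rw [hb]
  simp only [map_sum, map_add, map_smul, smul_eq_mul]

theorem symplecticForm_hamVF (H : PhaseSpace n → ℝ) (x b : PhaseSpace n) :
    symplecticForm n (hamVF H x) b = fderiv ℝ H x b := by
  rw [symplecticForm_apply, clm_apply_eq_sum (fderiv ℝ H x) b]
  exact Finset.sum_congr rfl fun i _ => by simp only [hamVF]; ring

theorem symplecticForm_injective {a b : PhaseSpace n}
    (h : ∀ c, symplecticForm n a c = symplecticForm n b c) : a = b := by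
  ext i
  · simpa [symplecticForm_apply, Pi.single_apply] using h (0, Pi.single i 1)
  · simpa [symplecticForm_apply, Pi.single_apply] using h (Pi.single i 1, 0)

theorem pbracket_eq_fderiv_hamVF (f g : PhaseSpace n → ℝ) (x : PhaseSpace n) :
    pbracket f g x = fderiv ℝ f x (hamVF g x) := by
  rw [clm_apply_eq_sum (fderiv ℝ f x), pbracket]
  exact Finset.sum_congr rfl fun i _ => by simp only [hamVF]; ring

theorem contDiff_hamVF {H : PhaseSpace n → ℝ} (hH : ContDiff ℝ 3 H) : ContDiff ℝ 2 (hamVF H) := by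
  have hd : ContDiff ℝ 2 (fderiv ℝ H) := hH.fderiv_right (by norm_num)
  exact (contDiff_pi.2 fun i => hd.clm_apply contDiff_const).prodMk
    (contDiff_pi.2 fun i => (hd.clm_apply contDiff_const).neg)

/-- The Lie derivative of the symplectic form along `u • X_H` is `du ∧ dH`. -/
theorem symplecticForm_fderiv_smul_hamVF {H u : PhaseSpace n → ℝ} (hH : ContDiff ℝ 3 H)
    (hu : Differentiable ℝ u) (x a b : PhaseSpace n) :
    symplecticForm n (fderiv ℝ (fun y => u y • hamVF H y) x a) b +
        symplecticForm n a (fderiv ℝ (fun y => u y • hamVF H y) x b) =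
      fderiv ℝ u x a * fderiv ℝ H x b - fderiv ℝ u x b * fderiv ℝ H x a := by
  have hVd : DifferentiableAt ℝ (fun y => u y • hamVF H y) x :=
    (hu x).smul ((contDiff_hamVF hH).differentiable two_ne_zero x)
  have hdd : DifferentiableAt ℝ (fderiv ℝ H) x :=
    (hH.fderiv_right (m := 2) (by norm_num)).differentiable two_ne_zero x
  have key : ∀ c d : PhaseSpace n, symplecticForm n (fderiv ℝ (fun y => u y • hamVF H y) x c) d =
      u x * fderiv ℝ (fderiv ℝ H) x c d + fderiv ℝ u x c * fderiv ℝ H x d := by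
    intro c d
    have h1 : HasFDerivAt (fun y => symplecticForm n (u y • hamVF H y) d) _ x :=
      ((symplecticForm n).flip d).hasFDerivAt.comp x hVd.hasFDerivAt
    have h2 : HasFDerivAt (fun y => u y * fderiv ℝ H y d) _ x :=
      (hu x).hasFDerivAt.mul (hdd.hasFDerivAt.clm_apply (hasFDerivAt_const d x))
    have h3 : (fun y => symplecticForm n (u y • hamVF H y) d) = fun y => u y * fderiv ℝ H y d := by
      ext y
      simp [symplecticForm_hamVF]
    rw [h3] at h1
    simpa [mul_comm] using DFunLike.congr_fun (h1.unique h2) c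
  have hsymm : fderiv ℝ (fderiv ℝ H) x a b = fderiv ℝ (fderiv ℝ H) x b a :=
    (hH.contDiffAt.isSymmSndFDerivAt (by simp; norm_num)) a b
  rw [symplecticForm_antisymm a, key, key, hsymm]
  ring

/-- A function whose derivative vanishes along a vector field is constant along its flow. -/
theorem comp_flow_eq_of_fderiv_eq_zero {E : Type*} [NormedAddCommGroup E] [NormedSpace ℝ E]
    {V : E → E} {ψ : ℝ → E → E} (hψ0 : ∀ x, ψ 0 x = x)
    (hψ : ∀ t x, HasDerivAt (fun τ => ψ τ x) (V (ψ t x)) t) {F : E → ℝ} (hF : Differentiable ℝ F)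
    (hFV : ∀ x, fderiv ℝ F x (V x) = 0) (t : ℝ) (x : E) : F (ψ t x) = F x := by
  have h : ∀ s, HasDerivAt (fun τ => F (ψ τ x)) 0 s := fun s => by
    have h := (hF (ψ s x)).hasFDerivAt.comp_hasDerivAt s (hψ s x)
    rwa [hFV] at h
  simpa [hψ0] using is_const_of_deriv_eq_zero (fun s => (h s).differentiableAt)
    (fun s => (h s).deriv) t 0

/-- The derivative of an invariant function is preserved by the linearized flow. -/
theorem fderiv_apply_of_comp_eq {E : Type*} [NormedAddCommGroup E] [NormedSpace ℝ E]
    {F : E → ℝ} (hF : Differentiable ℝ F) {θ : E → E} (hθ : ∀ y, F (θ y) = F y) {x : E}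
    {M : E →L[ℝ] E} (hM : HasFDerivAt θ M x) (a : E) :
    fderiv ℝ F (θ x) (M a) = fderiv ℝ F x a := by
  have h1 : HasFDerivAt (fun y => F (θ y)) _ x := (hF (θ x)).hasFDerivAt.comp x hM
  simp only [hθ] at h1
  exact (DFunLike.congr_fun h1.fderiv a).symm

/-- If the points of a flow are periodic with period `T`, then `T` is a first integral. -/
theorem fderiv_period_apply_eq_zero {E : Type*} [NormedAddCommGroup E] [NormedSpace ℝ E]
    {V : E → E} {φ : ℝ → E → E} (hφ0 : ∀ x, φ 0 x = x)
    (hφadd : ∀ s t x, φ (s + t) x = φ s (φ t x))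
    (hφ : ∀ t x, HasDerivAt (fun τ => φ τ x) (V (φ t x)) t) {T : E → ℝ} (hT : Differentiable ℝ T)
    (hper : ∀ x, φ (T x) x = x) (x : E) : fderiv ℝ T x (V x) = 0 := by
  have hconst : ∀ s, φ (T (φ s x)) x = x := fun s => by
    have h := hper (φ s x)
    rw [← hφadd, add_comm, hφadd] at h
    have h2 := congrArg (φ (-s)) h
    simpa only [← hφadd, neg_add_cancel, neg_add_cancel_left, hφ0, zero_add, ← add_assoc] using h2
  have hτ : HasDerivAt (fun s => T (φ s x)) (fderiv ℝ T x (V x)) 0 := by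
    have h := (hT (φ 0 x)).hasFDerivAt.comp_hasDerivAt (0 : ℝ) (hφ 0 x)
    rwa [hφ0] at h
  have h := (hφ (T (φ 0 x)) x).scomp (0 : ℝ) hτ
  rw [hconst] at h
  have h0 : HasDerivAt (fun _ : ℝ => x) (fderiv ℝ T x (V x) • V x) 0 :=
    h.congr_of_eventuallyEq (.of_forall fun s => (hconst s).symm)
  rcases smul_eq_zero.1 (h0.unique (hasDerivAt_const _ _)) with h1 | h1
  · exact h1
  · simp [h1]

end Symplectic

/-- Averaging along the S¹-action commutes with the Poisson bracket against
S¹-invariant functions: `⟨{f,g}⟩ = {⟨f⟩, g}`. -/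
theorem average_poisson_bracket_invariant
    {n : ℕ} (H : ((Fin n → ℝ) × (Fin n → ℝ)) → ℝ) (hH : ContDiff ℝ (⊤ : ℕ∞) H)
    (ω : ((Fin n → ℝ) × (Fin n → ℝ)) → ℝ) (hω : ContDiff ℝ (⊤ : ℕ∞) ω)
    (hωpos : ∀ x, 0 < ω x)
    (φ ψ : ℝ → ((Fin n → ℝ) × (Fin n → ℝ)) → ((Fin n → ℝ) × (Fin n → ℝ)))
    (hφ0 : ∀ x, φ 0 x = x) (hφadd : ∀ s t : ℝ, ∀ x, φ (s + t) x = φ s (φ t x))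
    (hφflow : ∀ t : ℝ, ∀ x, HasDerivAt (fun τ : ℝ => φ τ x) (hamVF H (φ t x)) t)
    (hφper : ∀ t : ℝ, ∀ x, φ (t + 2 * π / ω x) x = φ t x)
    (hψ0 : ∀ x, ψ 0 x = x) (hψadd : ∀ s t : ℝ, ∀ x, ψ (s + t) x = ψ s (ψ t x))
    (hψflow : ∀ t : ℝ, ∀ x, HasDerivAt (fun τ : ℝ => ψ τ x)
      ((ω (ψ t x))⁻¹ • hamVF H (ψ t x)) t)
    (hψper : ∀ t : ℝ, ∀ x, ψ (t + 2 * π) x = ψ t x)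
    (f g : ((Fin n → ℝ) × (Fin n → ℝ)) → ℝ)
    (hf : ContDiff ℝ (⊤ : ℕ∞) f) (hg : ContDiff ℝ (⊤ : ℕ∞) g)
    (hginv : ∀ t : ℝ, ∀ x, g (ψ t x) = g x) :
    ∀ x, (1 / (2 * π)) * ∫ t in (0:ℝ)..(2 * π), pbracket f g (ψ t x)
      = pbracket (fun y => (1 / (2 * π)) * ∫ t in (0:ℝ)..(2 * π), f (ψ t y)) g x := by
  have hlt : (3 : WithTop ℕ∞) ≤ ((⊤ : ℕ∞) : WithTop ℕ∞) := 
    WithTop.coe_le_coe.2 (le_top (a := (3 : ℕ∞)))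
  have hH3 : ContDiff ℝ 3 H := hH.of_le hlt
  have hg1 : ContDiff ℝ 1 g := hg.of_le (by simp)
  have hf1 : ContDiff ℝ 1 f := hf.of_le (by simp)
  have hHd : Differentiable ℝ H := hH3.differentiable three_ne_zero
  set u : PhaseSpace n → ℝ := fun x => (ω x)⁻¹
  have huc : ContDiff ℝ 3 u := (hω.of_le hlt).inv fun x => (hωpos x).ne'
  have hud : Differentiable ℝ u := huc.differentiable three_ne_zero
  set V : PhaseSpace n → PhaseSpace n := fun x => u x • hamVF H x
  have hV : ContDiff ℝ 2 V := (huc.of_le (by norm_num)).smul (contDiff_hamVF hH3)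
  have hψ : ∀ t x, HasDerivAt (fun τ => ψ τ x) (V (ψ t x)) t := hψflow
  have h2π : (0 : ℝ) ≤ 2 * π := by positivity
  have hψ2π : ∀ x, ψ (2 * π) x = x := fun x => by simpa [hψ0] using hψper 0 x
  have hHinv := comp_flow_eq_of_fderiv_eq_zero hψ0 hψ hHd fun x => by
    have h := symplecticForm_antisymm (hamVF H x) (hamVF H x)
    rw [symplecticForm_hamVF] at h
    simp only [V, map_smul, smul_eq_mul, show fderiv ℝ H x (hamVF H x) = 0 by linarith, mul_zero]
  have huX : ∀ x, fderiv ℝ u x (hamVF H x) = 0 := fun x => by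
    have h := fderiv_period_apply_eq_zero hφ0 hφadd hφflow (T := fun y => 2 * π * u y)
      (hud.const_mul _) (fun y => by simpa [hφ0, div_eq_mul_inv] using hφper 0 y) x
    rw [fderiv_const_mul (hud x)] at h
    simpa [pi_ne_zero] using h
  have huinv := comp_flow_eq_of_fderiv_eq_zero hψ0 hψ hud fun x => by
    simp only [V, map_smul, huX, smul_zero]
  intro x
  obtain ⟨M, hM0, hM, hMψ⟩ := exists_hasFDerivAt_flow hV hψ0 hψ x h2π
  have hM2π : M (2 * π) = .id ℝ _ :=
    (hMψ _ ⟨h2π, le_rfl⟩).unique ((hasFDerivAt_id x).congr_of_eventuallyEq (.of_forall hψ2π))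
  have hsymp : ∀ t ∈ Icc 0 (2 * π), ∀ a b,
      symplecticForm n (M t a) (M t b) = symplecticForm n a b := by
    intro t ht a b
    set c : ℝ := fderiv ℝ u x a * fderiv ℝ H x b - fderiv ℝ u x b * fderiv ℝ H x a
    have hd : ∀ s ∈ Icc 0 (2 * π), HasDerivWithinAt
        (fun s => symplecticForm n (M s a) (M s b) - s * c) 0 (Icc 0 (2 * π)) s := by
      intro s hs
      have hMa : ∀ d, HasDerivWithinAt (fun s => M s d) (fderiv ℝ V (ψ s x) (M s d))
          (Icc 0 (2 * π)) s := fun d => by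
        simpa using (hM s hs).clm_apply (hasDerivWithinAt_const s _ d)
      have h1 := ((symplecticForm n).hasFDerivAt.comp_hasDerivWithinAt s (hMa a)).clm_apply (hMa b)
      have h2 := symplecticForm_fderiv_smul_hamVF hH3 hud (ψ s x) (M s a) (M s b)
      simp only [fderiv_apply_of_comp_eq hud (huinv s) (hMψ s hs),
        fderiv_apply_of_comp_eq hHd (hHinv s) (hMψ s hs)] at h2
      refine (h1.sub ((hasDerivAt_id' s).hasDerivWithinAt.mul_const c)).congr_deriv ?_
      rw [one_mul, sub_eq_zero]
      exact h2
    have hconst := constant_of_has_deriv_right_zero (fun s hs => (hd s hs).continuousWithinAt)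
      (fun s hs => (hd s (Ico_subset_Icc_self hs)).mono_of_mem_nhdsWithin
        (Icc_mem_nhdsGE_of_mem hs))
    have hc0 : c = 0 := by
      have := hconst (2 * π) ⟨h2π, le_rfl⟩
      simpa [hM0, hM2π, pi_ne_zero] using this
    simpa [hM0, hc0] using hconst t ht
  have hMg : ∀ t ∈ Icc 0 (2 * π), M t (hamVF g x) = hamVF g (ψ t x) := by
    intro t ht
    have hinj : Function.Injective (M t) := fun a b hab =>
      symplecticForm_injective fun c => by rw [← hsymp t ht, hab, hsymp t ht]
    have hsurj : Function.Surjective (M t) :=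
      LinearMap.injective_iff_surjective (f := (M t).toLinearMap).1 hinj
    refine symplecticForm_injective fun c => ?_
    obtain ⟨b, rfl⟩ := hsurj c
    rw [hsymp t ht, symplecticForm_hamVF, symplecticForm_hamVF,
      fderiv_apply_of_comp_eq (hg1.differentiable one_ne_zero) (hginv t) (hMψ t ht)]
  obtain ⟨hint, hder⟩ := hasFDerivAt_integral_comp_flow hV hψ0 hψ hf1 h2π
    (fun s hs => (hM s hs).continuousWithinAt) hMψ
  rw [pbracket_eq_fderiv_hamVF, (hder.const_mul _).fderiv, smul_apply,
    ContinuousLinearMap.intervalIntegral_apply hint, smul_eq_mul]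
  congr 1
  refine intervalIntegral.integral_congr fun t ht => ?_
  rw [uIcc_of_le h2π] at ht
  simp [pbracket_eq_fderiv_hamVF, hMg t ht]
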